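/- In the block matrix setup, for every t ≥ 0 it holds that d(t) ≠ 0 and, writing (T + tI)⁻¹ e_1^{(m+k)} = (x(t); z(t)) with x(t) ∈ ℝ^m and z(t) ∈ ℝ^k, one has z(t) = (ε(t) / (β d(t))) · (S + tI)⁻¹ e_1^{(k)}. -/

import Mathlib

open Matrix

section BlockCoupling

variable {K n p : Type*} [Field K] [Fintype n] [DecidableEq n] [Fintype p] [DecidableEq p]

theorem fromBlocks_single_mulVec_elim (A : Matrix n n K) (B : Matrix p p K) (b : K) (i : n) (j : p)
    (x : n → K) (z : p → K) :
    fromBlocks A (single i j b) (single j i b) B *ᵥ Sum.elim x z =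
      Sum.elim (A *ᵥ x + (b * z j) • Pi.single i 1) ((b * x i) • Pi.single j 1 + B *ᵥ z) := by
  rw [fromBlocks_mulVec, Sum.elim_comp_inl, Sum.elim_comp_inr, single_mulVec, single_mulVec,
    ← Pi.single_smul, ← Pi.single_smul, smul_eq_mul, smul_eq_mul, mul_one, mul_one]
  rfl

/-- The capacitance determinant of two invertible blocks coupled through a single entry does not
vanish when the coupled matrix is invertible. -/
theorem capacitance_ne_zero {A : Matrix n n K} {B : Matrix p p K} {b : K} {i : n} {j : p}
    (hA : IsUnit A) (hB : IsUnit B) (hb : b ≠ 0)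
    (hM : IsUnit (fromBlocks A (single i j b) (single j i b) B)) :
    A⁻¹ i i * B⁻¹ j j - 1 / b ^ 2 ≠ 0 := by
  intro h
  have hAu := (isUnit_iff_isUnit_det A).1 hA
  have hBu := (isUnit_iff_isUnit_det B).1 hB
  have hprod : b ^ 2 * (A⁻¹ i i * B⁻¹ j j) = 1 := by
    rw [sub_eq_zero.1 h]
    field_simp
  set z : p → K := B⁻¹ *ᵥ Pi.single j 1 with hz
  set x : n → K := (-(b * B⁻¹ j j)) • (A⁻¹ *ᵥ Pi.single i 1) with hx
  have hzj : z j = B⁻¹ j j := by simp [hz]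
  have hxi : x i = -(b * B⁻¹ j j) * A⁻¹ i i := by simp [hx]
  have hBz : B *ᵥ z = Pi.single j 1 := by
    rw [hz, mulVec_mulVec, mul_nonsing_inv B hBu, one_mulVec]
  have hAx : A *ᵥ x = (-(b * B⁻¹ j j)) • Pi.single i 1 := by
    rw [hx, mulVec_smul, mulVec_mulVec, mul_nonsing_inv A hAu, one_mulVec]
  have hker : fromBlocks A (single i j b) (single j i b) B *ᵥ Sum.elim x z = 0 := by
    have hcoef : b * x i = -1 := by
      rw [hxi]
      linear_combination -hprod
    rw [fromBlocks_single_mulVec_elim, hBz, hAx, hzj, hcoef]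
    simp
  have hv : Sum.elim x z = 0 :=
    mulVec_injective_iff_isUnit.2 hM (by rw [hker, mulVec_zero])
  have hz0 : z = 0 := funext fun l => congrFun hv (Sum.inr l)
  have := congrFun hBz j
  simp [hz0] at this

/-- The lower block of a solution of the coupled system whose right-hand side is a basis vector of
the upper block. -/
theorem lower_block_eq_of_mulVec_eq_single {A : Matrix n n K} {B : Matrix p p K} {b : K} {i l : n}
    {j : p} {x : n → K} {z : p → K} (hA : IsUnit A) (hB : IsUnit B) (hb : b ≠ 0)
    (hd : A⁻¹ i i * B⁻¹ j j - 1 / b ^ 2 ≠ 0)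
    (h : fromBlocks A (single i j b) (single j i b) B *ᵥ Sum.elim x z =
      Pi.single (Sum.inl l) 1) :
    z = (A⁻¹ i l / (b * (A⁻¹ i i * B⁻¹ j j - 1 / b ^ 2))) • (B⁻¹ *ᵥ Pi.single j 1) := by
  have hAu := (isUnit_iff_isUnit_det A).1 hA
  have hBu := (isUnit_iff_isUnit_det B).1 hB
  rw [fromBlocks_single_mulVec_elim, ← Sum.elim_single_zero, Sum.elim_eq_iff] at h
  obtain ⟨hupper, hlower⟩ := h
  have hz : z = (-(b * x i)) • (B⁻¹ *ᵥ Pi.single j 1) := by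
    have := congrArg (B⁻¹ *ᵥ ·) (eq_neg_of_add_eq_zero_right hlower)
    simpa only [mulVec_mulVec, nonsing_inv_mul B hBu, one_mulVec, ← neg_smul, mulVec_smul]
      using this
  have hx : x = A⁻¹ *ᵥ Pi.single l 1 - (b * z j) • (A⁻¹ *ᵥ Pi.single i 1) := by
    have := congrArg (A⁻¹ *ᵥ ·) (eq_sub_of_add_eq hupper)
    simpa only [mulVec_mulVec, nonsing_inv_mul A hAu, one_mulVec, mulVec_sub, mulVec_smul]
      using this
  have hzj : z j = -(b * x i) * B⁻¹ j j := by simpa using congrFun hz j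
  have hxi : x i = A⁻¹ i l - b * z j * A⁻¹ i i := by simpa using congrFun hx i
  have hcoef : -(b * x i) = A⁻¹ i l / (b * (A⁻¹ i i * B⁻¹ j j - 1 / b ^ 2)) := by
    rw [eq_div_iff (mul_ne_zero hb hd)]
    rw [hzj] at hxi
    field_simp
    linear_combination hxi
  rw [← hcoef]
  exact hz

end BlockCoupling

/-- **Lemma 3.3, formula (3.14)**: in the block matrix setup
`T = [[T₁, β e_m e₁ᵀ], [β e₁ e_mᵀ, S]]` with `T` positive definite, for every `t ≥ 0` the
determinant `d(t) = γ(t)δ(t) − 1/β²` of the Woodbury capacitance matrix is nonzero and,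
writing `(T + tI)⁻¹ e₁ = (x(t); z(t))`, one has
`z(t) = (ε(t) / (β d(t))) (S + tI)⁻¹ e₁`. -/
theorem woodbury_bottom_block
    {m k : ℕ} (hm : 1 ≤ m) (hk : 1 ≤ k)
    (T₁ : Matrix (Fin m) (Fin m) ℝ) (S : Matrix (Fin k) (Fin k) ℝ)
    (hT₁ : T₁.IsSymm) (hS : S.IsSymm)
    (β : ℝ) (hβ : 0 < β)
    (T : Matrix (Fin m ⊕ Fin k) (Fin m ⊕ Fin k) ℝ)
    (hT : T = Matrix.fromBlocks T₁
      (Matrix.of fun i j => if i = (⟨m - 1, by omega⟩ : Fin m) ∧ j = (⟨0, hk⟩ : Fin k) then β else 0)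
      (Matrix.of fun i j => if i = (⟨0, hk⟩ : Fin k) ∧ j = (⟨m - 1, by omega⟩ : Fin m) then β else 0)
      S)
    (hTpd : T.PosDef)
    (γ δ ε d : ℝ → ℝ)
    (hγ : ∀ t, γ t = (T₁ + t • 1)⁻¹ ⟨m - 1, by omega⟩ ⟨m - 1, by omega⟩)
    (hδ : ∀ t, δ t = (S + t • 1)⁻¹ ⟨0, hk⟩ ⟨0, hk⟩)
    (hε : ∀ t, ε t = (T₁ + t • 1)⁻¹ ⟨m - 1, by omega⟩ ⟨0, hm⟩)
    (hd : ∀ t, d t = γ t * δ t - 1 / β ^ 2)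
    (t : ℝ) (ht : 0 ≤ t)
    (z : Fin k → ℝ)
    (hz : ∀ j, z j = (T + t • 1)⁻¹.mulVec (Pi.single (Sum.inl ⟨0, hm⟩) 1) (Sum.inr j)) :
    d t ≠ 0 ∧
      z = (ε t / (β * d t)) • (S + t • 1)⁻¹.mulVec (Pi.single ⟨0, hk⟩ 1) := by
  have hM : T + t • 1 = fromBlocks (T₁ + t • 1) (single ⟨m - 1, by omega⟩ ⟨0, hk⟩ β)
      (single ⟨0, hk⟩ ⟨m - 1, by omega⟩ β) (S + t • 1) := by
    rw [hT, ← fromBlocks_one, fromBlocks_smul, fromBlocks_add]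
    congr 1 <;> ext <;> simp [single, eq_comm]
  have hpd : (T + t • 1).PosDef := hTpd.add_posSemidef (PosSemidef.one.smul ht)
  have hA : IsUnit (T₁ + t • 1) := by
    have := (hpd.submatrix (e := Sum.inl) Sum.inl_injective).isUnit
    rwa [hM] at this
  have hB : IsUnit (S + t • 1) := by
    have := (hpd.submatrix (e := Sum.inr) Sum.inr_injective).isUnit
    rwa [hM] at this
  have hdne := capacitance_ne_zero hA hB hβ.ne' (hM ▸ hpd.isUnit)
  rw [hd, hγ, hδ, hε]
  refine ⟨hdne, lower_block_eq_of_mulVec_eq_single hA hB hβ.ne' hdne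
    (x := fun l => ((T + t • 1)⁻¹ *ᵥ Pi.single (Sum.inl ⟨0, hm⟩) 1) (Sum.inl l)) ?_⟩
  rw [← hM, funext hz]
  have hsplit : Sum.elim
      (fun l => ((T + t • 1)⁻¹ *ᵥ Pi.single (Sum.inl ⟨0, hm⟩) 1) (Sum.inl l))
      (fun l => ((T + t • 1)⁻¹ *ᵥ Pi.single (Sum.inl ⟨0, hm⟩) 1) (Sum.inr l)) =
      (T + t • 1)⁻¹ *ᵥ Pi.single (Sum.inl ⟨0, hm⟩) 1 :=
    funext fun r => by cases r <;> rfl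
  rw [hsplit, mulVec_mulVec, mul_nonsing_inv _ ((isUnit_iff_isUnit_det _).1 hpd.isUnit),
    one_mulVec]
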